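/- arXiv:2312.03389 — 6 statements merged into one kernel-verified Lean document; each statement's English description precedes it below -/
import Mathlib

section
/- Let H be a real Hilbert space and let A : H → H be a continuous linear operator. Then A is cyclic monotone — that is, for every natural number N and every finite sequence u₀, u₁, …, u_N in H, ⟨A u₀, u₀ − u₁⟩ + ⟨A u₁, u₁ − u₂⟩ + … + ⟨A u_N, u_N − u₀⟩ ≥ 0 — if and only if A is self-adjoint (⟨A u, w⟩ = ⟨u, A w⟩ for all u, w ∈ H) and positive (⟨A u, u⟩ ≥ 0 for all u ∈ H). -/
open scoped RealInnerProductSpace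

theorem aux_step {H : Type*} [NormedAddCommGroup H] [InnerProductSpace ℝ H]
    (A : H →L[ℝ] H)
    (h : ∀ N : ℕ, ∀ u : Fin (N + 1) → H,
        0 ≤ ∑ i : Fin (N + 1), ⟪A (u i), u i - u (i + 1)⟫) (x y : H) (N : ℕ) :
    0 ≤ (1 - Real.cos (2 * Real.pi / (N + 1))) * (⟪A x, x⟫ + ⟪A y, y⟫)
      - Real.sin (2 * Real.pi / (N + 1)) * (⟪A x, y⟫ - ⟪A y, x⟫) := by
  set θ : ℝ := 2 * Real.pi / (N + 1) with hθ
  have hN : (N + 1 : ℝ) ≠ 0 := by positivity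
  have hper : ((N : ℝ) + 1) * θ = 2 * Real.pi := by rw [hθ]; field_simp
  have hc : ∀ i : Fin (N + 1), Real.cos (((i + 1 : Fin (N + 1)) : ℕ) * θ)
      = Real.cos ((i : ℕ) * θ + θ) := by
    intro i
    rw [Fin.val_add_one]
    split_ifs with hi
    · subst hi
      have : ((Fin.last N : Fin (N + 1)) : ℕ) * θ + θ = 2 * Real.pi := by
        rw [← hper]; simp; ring
      rw [this]; simp
    · push_cast; congr 1; ring
  have hs : ∀ i : Fin (N + 1), Real.sin (((i + 1 : Fin (N + 1)) : ℕ) * θ)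
      = Real.sin ((i : ℕ) * θ + θ) := by
    intro i
    rw [Fin.val_add_one]
    split_ifs with hi
    · subst hi
      have : ((Fin.last N : Fin (N + 1)) : ℕ) * θ + θ = 2 * Real.pi := by
        rw [← hper]; simp; ring
      rw [this]; simp
    · push_cast; congr 1; ring
  have h1 := h N (fun i => Real.cos ((i : ℕ) * θ) • x + Real.sin ((i : ℕ) * θ) • y)
  have h2 := h N (fun i => Real.cos ((i : ℕ) * θ) • y - Real.sin ((i : ℕ) * θ) • x)
  have h3 := add_nonneg h1 h2
  rw [← Finset.sum_add_distrib, Finset.sum_congr rfl (g := fun _ =>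
    (1 - Real.cos θ) * (⟪A x, x⟫ + ⟪A y, y⟫)
      - Real.sin θ * (⟪A x, y⟫ - ⟪A y, x⟫))] at h3
  · rw [Finset.sum_const, nsmul_eq_mul] at h3
    refine nonneg_of_mul_nonneg_right h3 ?_
    simp
    positivity
  · intro i _
    simp only [hc, hs, Real.cos_add, Real.sin_add]
    have hp := Real.sin_sq_add_cos_sq ((i : ℕ) * θ)
    generalize Real.cos ((i : ℕ) * θ) = c at *
    generalize Real.sin ((i : ℕ) * θ) = s at *
    simp only [map_add, map_sub, map_smul, inner_add_left, inner_sub_left, inner_add_right,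
      inner_sub_right, real_inner_smul_left, real_inner_smul_right]
    linear_combination ((1 - Real.cos θ) * (⟪A x, x⟫ + ⟪A y, y⟫)
      - Real.sin θ * (⟪A x, y⟫ - ⟪A y, x⟫)) * hp

theorem aux_le {H : Type*} [NormedAddCommGroup H] [InnerProductSpace ℝ H]
    (A : H →L[ℝ] H)
    (h : ∀ N : ℕ, ∀ u : Fin (N + 1) → H,
        0 ≤ ∑ i : Fin (N + 1), ⟪A (u i), u i - u (i + 1)⟫) (x y : H) :
    ⟪A x, y⟫ ≤ ⟪A y, x⟫ := by
  have key : ∀ N : ℕ, 0 ≤ Real.sin (Real.pi / ((N + 1 : ℕ) + 1)) * (⟪A x, x⟫ + ⟪A y, y⟫)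
      - Real.cos (Real.pi / ((N + 1 : ℕ) + 1)) * (⟪A x, y⟫ - ⟪A y, x⟫) := by
    intro N
    have h1 := aux_step A h x y (N + 1)
    have e : 2 * Real.pi / (((N + 1 : ℕ) : ℝ) + 1) = 2 * (Real.pi / ((N + 1 : ℕ) + 1)) := by ring
    rw [e, Real.sin_two_mul, Real.cos_two_mul] at h1
    have hpos : 0 < Real.sin (Real.pi / ((N + 1 : ℕ) + 1)) := by
      apply Real.sin_pos_of_pos_of_lt_pi
      · positivity
      · apply div_lt_self Real.pi_pos
        push_cast
        have : (0 : ℝ) ≤ N := by positivity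
        linarith
    refine nonneg_of_mul_nonneg_right (a := 2 * Real.sin (Real.pi / ((N + 1 : ℕ) + 1))) ?_
      (by positivity)
    have hp := Real.sin_sq_add_cos_sq (Real.pi / ((N + 1 : ℕ) + 1))
    refine h1.trans_eq ?_
    linear_combination (-2) * (⟪A x, x⟫ + ⟪A y, y⟫) * hp
  have ht : Filter.Tendsto (fun N : ℕ => Real.pi / (((N + 1 : ℕ) : ℝ) + 1)) Filter.atTop
      (nhds 0) := by
    have := (tendsto_const_div_atTop_nhds_zero_nat Real.pi).comp (Filter.tendsto_add_atTop_nat 2)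
    refine this.congr fun N => ?_
    simp only [Function.comp]
    push_cast
    congr 1
    ring
  have hcont : Continuous (fun t : ℝ => Real.sin t * (⟪A x, x⟫ + ⟪A y, y⟫)
      - Real.cos t * (⟪A x, y⟫ - ⟪A y, x⟫)) := by fun_prop
  have := ge_of_tendsto' ((hcont.tendsto 0).comp ht) key
  simp at this
  linarith

/-- A continuous linear operator on a real Hilbert space is cyclic
monotone if and only if it is self-adjoint and positive. -/
theorem continuousLinear_cyclicMonotone_iff_selfAdjoint_positive
    {H : Type*} [NormedAddCommGroup H] [InnerProductSpace ℝ H] [CompleteSpace H]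
    (A : H →L[ℝ] H) :
    (∀ N : ℕ, ∀ u : Fin (N + 1) → H,
        0 ≤ ∑ i : Fin (N + 1), ⟪A (u i), u i - u (i + 1)⟫) ↔
    ((∀ u w : H, ⟪A u, w⟫ = ⟪u, A w⟫) ∧ (∀ u : H, 0 ≤ ⟪A u, u⟫)) := by
  constructor
  · intro h
    refine ⟨fun u w => ?_, fun u => ?_⟩
    · rw [real_inner_comm (A w) u]
      exact le_antisymm (aux_le A h u w) (aux_le A h w u)
    · have := h 1 ![u, 0]
      simpa [Fin.sum_univ_two] using this
  · rintro ⟨hs, hp⟩ N u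
    have h1 : ∑ i : Fin (N + 1), ⟪A (u (i + 1)), u (i + 1)⟫ = ∑ i, ⟪A (u i), u i⟫ :=
      Equiv.sum_comp (Equiv.addRight (1 : Fin (N + 1))) (fun i => ⟪A (u i), u i⟫)
    have h2 : ∑ i : Fin (N + 1), (⟪A (u i), u i⟫ - ⟪A (u (i + 1)), u (i + 1)⟫) / 2
        ≤ ∑ i : Fin (N + 1), ⟪A (u i), u i - u (i + 1)⟫ := by
      refine Finset.sum_le_sum fun i _ => ?_
      have h3 := hp (u i - u (i + 1))
      have h4 := hs (u (i + 1)) (u i)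
      rw [real_inner_comm] at h4
      have h5 := real_inner_comm (A (u i)) (u (i + 1))
      have h6 := real_inner_comm (A (u (i + 1))) (u i)
      simp only [map_sub, inner_sub_left, inner_sub_right] at h3 ⊢
      linarith
    rw [← Finset.sum_div, Finset.sum_sub_distrib, h1] at h2
    simpa using h2
end

section
/- Let m be a positive integer and let g : [0,∞) → (m×m real matrices) be continuous. Suppose that for all continuous compactly supported u, w : [0,∞) → ℝ^m, ∫₀^∞ ⟨u(t), ∫₀^∞ g(t+τ) w(τ) dτ⟩ dt = ∫₀^∞ ⟨w(t), ∫₀^∞ g(t+τ) u(τ) dτ⟩ dt. Then g(t) = g(t)ᵀ for every t ≥ 0. -/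
open Matrix MeasureTheory

lemma hankel_aux_pos (h φ : ℝ → ℝ) (hh : Continuous h) (hφ : Continuous φ)
    (hc : HasCompactSupport φ) (h0 : ∀ t, 0 ≤ φ t) (c : ℝ) (hcp : φ c ≠ 0)
    (hpos : ∀ t τ, φ t ≠ 0 → φ τ ≠ 0 → 0 < h (t + τ)) :
    0 < ∫ t, φ t * ∫ τ, h (t + τ) * φ τ := by
  have key : ∀ t, φ t ≠ 0 → 0 < ∫ τ, h (t + τ) * φ τ := by
    intro t ht
    refine Continuous.integral_pos_of_hasCompactSupport_nonneg_nonzero (x := c)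
      (by fun_prop) hc.mul_left ?_ (mul_ne_zero (hpos t c ht hcp).ne' hcp)
    intro τ
    by_cases hτ : φ τ = 0
    · simp [hτ]
    · exact mul_nonneg (hpos t τ ht hτ).le (h0 τ)
  have hcont : Continuous fun t => ∫ τ, h (t + τ) * φ τ := by
    rw [← continuousOn_univ]
    refine continuousOn_integral_of_compact_support (k := tsupport φ) hc ?_ ?_
    · exact Continuous.continuousOn (by fun_prop)
    · intro p x _ hx
      simp [image_eq_zero_of_notMem_tsupport hx]
  refine Continuous.integral_pos_of_hasCompactSupport_nonneg_nonzero (x := c)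
      (by fun_prop) hc.mul_right ?_ (mul_ne_zero hcp (key c hcp).ne')
  intro t
  by_cases ht : φ t = 0
  · simp [ht]
  · exact mul_nonneg (h0 t) (key t ht).le

lemma hankel_aux_form (m : ℕ) (g : ℝ → Matrix (Fin m) (Fin m) ℝ)
    (G : ℝ → Matrix (Fin m) (Fin m) ℝ) (hG : Continuous G) (hgG : ∀ t, 0 ≤ t → g t = G t)
    (φ : ℝ → ℝ) (hφ : Continuous φ)
    (hc : HasCompactSupport φ) (hs : ∀ t, t ≤ 0 → φ t = 0) (i j : Fin m) :
    ∫ t in Set.Ioi (0:ℝ), (φ t • (Pi.single i 1 : Fin m → ℝ)) ⬝ᵥ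
      (∫ τ in Set.Ioi (0:ℝ), g (t + τ) *ᵥ (φ τ • (Pi.single j 1 : Fin m → ℝ)))
    = ∫ t, φ t * ∫ τ, G (t + τ) i j * φ τ := by
  have hent : ∀ i j, Continuous fun t => G t i j := fun i j => hG.matrix_elem i j
  rw [← setIntegral_eq_integral_of_forall_compl_eq_zero (s := Set.Ioi (0:ℝ))
    (f := fun t => φ t * ∫ τ, G (t + τ) i j * φ τ)]
  swap
  · intro t ht
    simp [hs t (by simpa using ht)]
  refine setIntegral_congr_fun measurableSet_Ioi ?_
  intro t ht
  have ht' : (0:ℝ) < t := ht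
  simp only [smul_dotProduct, single_dotProduct, one_mul, smul_eq_mul]
  congr 1
  have e1 : ∫ τ in Set.Ioi (0:ℝ), g (t + τ) *ᵥ (φ τ • (Pi.single j 1 : Fin m → ℝ))
      = ∫ τ in Set.Ioi (0:ℝ), fun k => G (t + τ) k j * φ τ := by
    refine setIntegral_congr_fun measurableSet_Ioi ?_
    intro τ hτ
    have hτ' : (0:ℝ) < τ := hτ
    funext k
    simp [hgG (t + τ) (by linarith), mulVec_smul, mul_comm]
  rw [e1, eval_integral]
  · refine setIntegral_eq_integral_of_forall_compl_eq_zero ?_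
    intro τ hτ
    simp [hs τ (by simpa using hτ)]
  · intro k
    have := hent k j
    refine Integrable.integrableOn (Continuous.integrable_of_hasCompactSupport (by fun_prop) ?_)
    exact hc.mul_left

/-- if the Hankel bilinear form with continuous kernel g is symmetric
on continuous compactly supported inputs, then g(t) is symmetric for all t ≥ 0. -/
theorem hankel_bilinear_form_symmetric_implies_kernel_symmetric
    (m : ℕ) (hm : 0 < m) (g : ℝ → Matrix (Fin m) (Fin m) ℝ)
    (hgcont : ContinuousOn g (Set.Ici 0))
    (hsym : ∀ u w : ℝ → Fin m → ℝ,
      Continuous u → HasCompactSupport u → Continuous w → HasCompactSupport w →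
      ∫ t in Set.Ioi (0:ℝ), u t ⬝ᵥ (∫ τ in Set.Ioi (0:ℝ), g (t + τ) *ᵥ w τ)
        = ∫ t in Set.Ioi (0:ℝ), w t ⬝ᵥ (∫ τ in Set.Ioi (0:ℝ), g (t + τ) *ᵥ u τ)) :
    ∀ t : ℝ, 0 ≤ t → (g t).IsSymm := by
  obtain ⟨G, hG, hgG⟩ : ∃ G : ℝ → Matrix (Fin m) (Fin m) ℝ, Continuous G ∧
      ∀ t, 0 ≤ t → g t = G t := by
    refine ⟨fun t => g (max t 0), ?_, fun t ht => by simp [ht]⟩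
    exact hgcont.comp_continuous (by fun_prop) (fun t => le_max_right t 0)
  have hent : ∀ i j, Continuous fun t => G t i j := fun i j => hG.matrix_elem i j
  have main : ∀ i j (s : ℝ), 0 < s → G s i j ≤ G s j i := by
    intro i j s hs
    by_contra! hlt
    have hdc : Continuous fun t => G t i j - G t j i := (hent i j).sub (hent j i)
    have hev : ∀ᶠ t in nhds s, 0 < G t i j - G t j i :=
      hdc.continuousAt.eventually (lt_mem_nhds (by linarith))
    obtain ⟨δ, hδ, hball⟩ := Metric.eventually_nhds_iff.1 hev
    let r := min δ s
    have hr : 0 < r := lt_min hδ hs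
    let b : ContDiffBump (s / 2) := ⟨r / 4, r / 2, by positivity, by linarith⟩
    have hsupp : ∀ t, b t ≠ 0 → |t - s / 2| < r / 2 := by
      intro t ht
      have : t ∈ Function.support b := ht
      rw [b.support_eq] at this
      simpa [Real.dist_eq] using this
    have hb0 : ∀ t, t ≤ 0 → b t = 0 := by
      intro t ht
      by_contra h
      have := abs_lt.1 (hsupp t h)
      have : r ≤ s := min_le_right _ _
      linarith
    have hbc : Continuous b := b.continuous
    have hbs : HasCompactSupport b := b.hasCompactSupport
    have hpos := hankel_aux_pos (fun t => G t i j - G t j i) b hdc hbc hbs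
      (fun t => b.nonneg) (s / 2) (b.pos_of_mem_ball (Metric.mem_ball_self b.rOut_pos)).ne'
      (by
        intro t τ ht hτ
        apply hball
        have h1 := abs_lt.1 (hsupp t ht)
        have h2 := abs_lt.1 (hsupp τ hτ)
        have : r ≤ δ := min_le_left _ _
        rw [Real.dist_eq, abs_lt]
        constructor <;> linarith)
    have hE := hsym (fun t => b t • (Pi.single i 1 : Fin m → ℝ))
      (fun t => b t • (Pi.single j 1 : Fin m → ℝ))
      (by fun_prop) hbs.smul_right (by fun_prop) hbs.smul_right
    rw [hankel_aux_form m g G hG hgG b hbc hbs hb0,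
      hankel_aux_form m g G hG hgG b hbc hbs hb0] at hE
    have hcont : ∀ i j, Continuous fun t => ∫ τ, G (t + τ) i j * b τ := by
      intro i j
      have := hent i j
      rw [← continuousOn_univ]
      refine continuousOn_integral_of_compact_support (k := tsupport b) hbs ?_ ?_
      · exact Continuous.continuousOn (by fun_prop)
      · intro p x _ hx
        simp [image_eq_zero_of_notMem_tsupport hx]
    have hint : ∀ i j t, Integrable fun τ => G (t + τ) i j * b τ := by
      intro i j t
      have := hent i j
      exact Continuous.integrable_of_hasCompactSupport (by fun_prop) hbs.mul_left
    have hint2 : ∀ i j, Integrable fun t => b t * ∫ τ, G (t + τ) i j * b τ := by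
      intro i j
      exact Continuous.integrable_of_hasCompactSupport (hbc.mul (hcont i j)) hbs.mul_right
    simp only [sub_mul] at hpos
    simp_rw [integral_sub (hint i j _) (hint j i _), mul_sub] at hpos
    rw [integral_sub (hint2 i j) (hint2 j i)] at hpos
    linarith
  intro t ht
  rw [hgG t ht]
  ext i j
  have heq : Set.EqOn (fun t => G t j i) (fun t => G t i j) (closure (Set.Ioi 0)) :=
    Set.EqOn.closure (fun s hs => le_antisymm (main j i s hs) (main i j s hs))
      (hent j i) (hent i j)
  rw [closure_Ioi] at heq
  exact heq ht
end

section
/- Let n, m, N be positive integers, let A be a real symmetric negative semidefinite n×n matrix and let C be a real m×n matrix. Then the shifted block Hankel matrix of size (N·m)×(N·m) whose (i,j) block (for 0 ≤ i, j ≤ N−1) is the m×m matrix C A^{i+j+1} Cᵀ is symmetric negative semidefinite. -/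
open Matrix

/-- for A symmetric negative semidefinite and any C, the shifted
block Hankel matrix with (i,j) block C A^{i+j+1} Cᵀ is symmetric negative
semidefinite (its negation is positive semidefinite). -/
theorem shifted_block_hankel_matrix_negSemidef
    (n m N : ℕ) (hn : 0 < n) (hm : 0 < m) (hN : 0 < N)
    (A : Matrix (Fin n) (Fin n) ℝ) (hAsymm : A.IsSymm) (hAnsd : (-A).PosSemidef)
    (C : Matrix (Fin m) (Fin n) ℝ) :
    (-(Matrix.of fun (p q : Fin N × Fin m) =>
      (C * A ^ ((p.1 : ℕ) + (q.1 : ℕ) + 1) * Cᵀ) p.2 q.2)).PosSemidef := by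
  have key := hAnsd.mul_mul_conjTranspose_same
    (Matrix.of fun (p : Fin N × Fin m) (k : Fin n) => (C * A ^ (p.1 : ℕ)) p.2 k)
  convert key using 1
  rw [Matrix.mul_neg, Matrix.neg_mul]
  congr 1
  ext p q
  have h : C * A ^ ((p.1 : ℕ) + (q.1 : ℕ) + 1) * Cᵀ
      = (C * A ^ (p.1 : ℕ)) * A * (C * A ^ (q.1 : ℕ))ᵀ := by
    rw [Matrix.transpose_mul, Matrix.transpose_pow, hAsymm.eq,
      show (p.1 : ℕ) + (q.1 : ℕ) + 1 = p.1 + (1 + q.1) by omega, pow_add, pow_add, pow_one]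
    simp only [Matrix.mul_assoc]
  rw [Matrix.of_apply, h]
  simp only [Matrix.mul_apply, Matrix.of_apply, Matrix.conjTranspose_apply,
    Matrix.transpose_apply, star_trivial]
end

section
/- Let Λ be a real symmetric positive definite matrix and let M be a real square matrix of the same size such that ΛM is symmetric and every complex eigenvalue of M has negative real part. Then every eigenvalue of M is real and negative, and ΛM is symmetric negative definite. -/
open Matrix

open scoped MatrixOrder in
theorem exists_factor_of_posDef {n : ℕ} (A : Matrix (Fin n) (Fin n) ℝ) (hA : A.PosDef) :
    ∃ B : Matrix (Fin n) (Fin n) ℝ, A = Bᴴ * B :=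
  CStarAlgebra.nonneg_iff_eq_star_mul_self.mp hA.posSemidef.nonneg

/-- if Λ is symmetric positive definite, ΛM is symmetric, and M is
Hurwitz, then every eigenvalue of M is real and negative, and ΛM is symmetric
negative definite (−ΛM is positive definite). -/
theorem hurwitz_symmetrizable_eigenvalues_real_negative
    (n : ℕ) (hn : 0 < n)
    (Λ M : Matrix (Fin n) (Fin n) ℝ)
    (hΛ : Λ.PosDef) (hΛM : (Λ * M).IsSymm)
    (hHurwitz : ∀ μ ∈ spectrum ℂ (M.map (fun x => (x : ℂ))), μ.re < 0) :
    (∀ μ ∈ spectrum ℂ (M.map (fun x => (x : ℂ))), μ.im = 0 ∧ μ.re < 0) ∧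
    (-(Λ * M)).PosDef := by
  obtain ⟨B, hB, hBu⟩ : ∃ B : Matrix (Fin n) (Fin n) ℝ, Λ = Bᴴ * B ∧ IsUnit B := by
    obtain ⟨B, hB⟩ := exists_factor_of_posDef Λ hΛ
    refine ⟨B, hB, ?_⟩
    have h := hΛ.isUnit
    rw [hB, Matrix.isUnit_iff_isUnit_det, Matrix.det_mul] at h
    rw [Matrix.isUnit_iff_isUnit_det]
    exact isUnit_of_mul_isUnit_right h
  obtain ⟨U, rfl⟩ := hBu
  set B : Matrix (Fin n) (Fin n) ℝ := U.val with hBdef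
  set C : Matrix (Fin n) (Fin n) ℝ := U⁻¹.val with hCdef
  have hBC : B * C = 1 := U.mul_inv
  have hCB : C * B = 1 := U.inv_mul
  set S : Matrix (Fin n) (Fin n) ℝ := B * M * C with hS
  have hcong : Bᴴ * S * B = Λ * M := by
    rw [hB, hS]
    calc Bᴴ * (B * M * C) * B = Bᴴ * B * M * (C * B) := by simp only [Matrix.mul_assoc]
      _ = _ := by rw [hCB, Matrix.mul_one]
  have hCB' : Cᴴ * Bᴴ = 1 := by
    rw [← Matrix.conjTranspose_mul, hBC, Matrix.conjTranspose_one]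
  have hS2 : S = Cᴴ * (Λ * M) * C := by
    rw [← hcong]
    calc S = (Cᴴ * Bᴴ) * S * (B * C) := by rw [hCB', hBC, Matrix.one_mul, Matrix.mul_one]
      _ = _ := by simp only [Matrix.mul_assoc]
  have hH : (Λ * M).IsHermitian := by
    rw [Matrix.IsHermitian, Matrix.conjTranspose_eq_transpose_of_trivial]
    exact hΛM
  have hSH : S.IsHermitian := by
    rw [hS2]
    exact Matrix.isHermitian_conjTranspose_mul_mul C hH
  have hchar : S.charpoly = M.charpoly := by
    have h := Matrix.charpoly_units_conj U M
    rw [← Matrix.coe_units_inv] at h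
    exact h
  have hcharC : (S.map (fun x => (x : ℂ))).charpoly = (M.map (fun x => (x : ℂ))).charpoly := by
    have h1 := Matrix.charpoly_map S Complex.ofRealHom
    have h2 := Matrix.charpoly_map M Complex.ofRealHom
    rw [hchar, ← h2] at h1
    exact h1
  have hSc : (S.map (fun x => (x : ℂ))).IsHermitian :=
    hSH.map _ (fun x => by simp)
  refine ⟨fun μ hμ => ⟨?_, hHurwitz μ hμ⟩, ?_⟩
  · rw [Matrix.mem_spectrum_iff_isRoot_charpoly, ← hcharC,
      ← Matrix.mem_spectrum_iff_isRoot_charpoly, hSc.spectrum_eq_image_range] at hμ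
    obtain ⟨x, -, rfl⟩ := hμ
    simp
  · have hneg : (-S).PosDef := by
      rw [hSH.neg.posDef_iff_eigenvalues_pos]
      intro i
      have h := hSH.neg.eigenvalues_mem_spectrum_real i
      rw [← spectrum.neg_eq, Set.mem_neg, Matrix.mem_spectrum_iff_isRoot_charpoly, hchar] at h
      have h2 := h.map (f := Complex.ofRealHom)
      rw [← Matrix.charpoly_map] at h2
      have h3 := hHurwitz _ (Matrix.mem_spectrum_iff_isRoot_charpoly.mpr h2)
      simpa using h3
    have h := hneg.conjTranspose_mul_mul_same (Matrix.mulVec_injective_of_isUnit U.isUnit)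
    rw [Matrix.mul_neg, Matrix.neg_mul] at h
    rw [← hcong]
    exact h
end

section
/- Let A and T be real n×n matrices with T symmetric positive semidefinite, A Hurwitz (every complex eigenvalue of A has negative real part), and AᵀT = TA. Then TA is symmetric negative semidefinite. -/
open Matrix

lemma aux_sqrt_pinv {n : ℕ} (T : Matrix (Fin n) (Fin n) ℝ) (hT : T.PosSemidef) :
    ∃ S R : Matrix (Fin n) (Fin n) ℝ, Sᵀ = S ∧ Rᵀ = R ∧ S * S = T ∧ S * R = R * S ∧
      S * R * S = S ∧ R * S * R = R := by
  have hsa : IsSelfAdjoint T := hT.isHermitian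
  have hfin : (spectrum ℝ T).Finite := Matrix.finite_real_spectrum
  have hc : ∀ f : ℝ → ℝ, ContinuousOn f (spectrum ℝ T) := fun f => hfin.continuousOn f
  have hnn : ∀ x ∈ spectrum ℝ T, 0 ≤ x := by
    intro x hx
    rw [hT.isHermitian.spectrum_real_eq_range_eigenvalues] at hx
    obtain ⟨i, rfl⟩ := hx
    exact hT.eigenvalues_nonneg i
  have hsym : ∀ f : ℝ → ℝ, (cfc f T)ᵀ = cfc f T := by
    intro f
    have h : IsSelfAdjoint (cfc f T) := cfc_predicate f T
    rw [← Matrix.conjTranspose_eq_transpose_of_trivial]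
    exact h
  have hm : ∀ f g : ℝ → ℝ, cfc f T * cfc g T = cfc (fun x => f x * g x) T :=
    fun f g => (cfc_mul f g T (hc f) (hc g)).symm
  refine ⟨cfc Real.sqrt T, cfc (fun x => (Real.sqrt x)⁻¹) T, hsym _, hsym _, ?_, ?_, ?_, ?_⟩
  · rw [hm]
    conv_rhs => rw [← cfc_id ℝ T hsa]
    exact cfc_congr fun x hx => Real.mul_self_sqrt (hnn x hx)
  · rw [hm, hm]
    exact cfc_congr fun x _ => mul_comm _ _
  · rw [hm, hm]
    exact cfc_congr fun x _ => mul_inv_mul_cancel _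
  · rw [hm, hm]
    exact cfc_congr fun x _ => by
      have := mul_inv_mul_cancel (Real.sqrt x)⁻¹
      rwa [inv_inv] at this

lemma aux_left_eig {n : ℕ} (A : Matrix (Fin n) (Fin n) ℝ) (l : ℝ) (v : Fin n → ℝ) (hv : v ≠ 0)
    (h : Aᵀ *ᵥ v = l • v) : (l : ℂ) ∈ spectrum ℂ (A.map (fun x => (x : ℂ))) := by
  have hdet : (algebraMap ℝ (Matrix (Fin n) (Fin n) ℝ) l - A).det = 0 := by
    rw [← Matrix.exists_vecMul_eq_zero_iff]
    refine ⟨v, hv, ?_⟩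
    rw [Matrix.mulVec_transpose] at h
    rw [Matrix.vecMul_sub, h, Algebra.algebraMap_eq_smul_one, Matrix.vecMul_smul,
      Matrix.vecMul_one, sub_self]
  rw [spectrum.mem_iff, Matrix.isUnit_iff_isUnit_det, isUnit_iff_ne_zero, not_not]
  have h2 := congrArg Complex.ofRealHom hdet
  rw [RingHom.map_det, map_zero] at h2
  rw [← h2]
  congr 1
  ext i j
  by_cases hij : i = j <;> simp [Matrix.algebraMap_matrix_apply, hij]

/-- if T is symmetric positive semidefinite, A is Hurwitz and
AᵀT = TA, then TA is symmetric negative semidefinite (−TA is positive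
semidefinite). -/
theorem hurwitz_posSemidef_commutation_negSemidef
    (n : ℕ) (A T : Matrix (Fin n) (Fin n) ℝ)
    (hT : T.PosSemidef)
    (hHurwitz : ∀ μ ∈ spectrum ℂ (A.map (fun x => (x : ℂ))), μ.re < 0)
    (hcomm : Aᵀ * T = T * A) :
    (T * A).IsSymm ∧ (-(T * A)).PosSemidef := by
  obtain ⟨S, R, hS, hR, hSS, hSR, hSRS, hRSR⟩ := aux_sqrt_pinv T hT
  have hTt : Tᵀ = T := by rw [← hSS, Matrix.transpose_mul, hS]
  have hsymm : (T * A)ᵀ = T * A := by rw [Matrix.transpose_mul, hTt, hcomm]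
  refine ⟨hsymm, ?_⟩
  obtain ⟨C, hC⟩ : ∃ C, C = R * (T * A) * R := ⟨_, rfl⟩
  have hCt : Cᵀ = C := by
    rw [hC, Matrix.transpose_mul, Matrix.transpose_mul, hsymm, hR]
    simp only [Matrix.mul_assoc]
  have hTARS : T * A * R * S = T * A := by
    calc T * A * R * S = Aᵀ * S * (S * R * S) := by
          rw [← hcomm, ← hSS]; simp only [Matrix.mul_assoc]
      _ = T * A := by rw [hSRS, ← hcomm, ← hSS, Matrix.mul_assoc]
  have hCS : C * S = S * A := by
    calc C * S = R * (T * A * R * S) := by rw [hC]; simp only [Matrix.mul_assoc]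
      _ = R * S * S * A := by rw [hTARS, ← hSS]; simp only [Matrix.mul_assoc]
      _ = S * A := by rw [← hSR, hSRS]
  have hSC : S * C = Aᵀ * S := by
    have := congrArg Matrix.transpose hCS
    rwa [Matrix.transpose_mul, Matrix.transpose_mul, hCt, hS] at this
  have hSCS : S * C * S = T * A := by
    rw [hSC, Matrix.mul_assoc, hSS, hcomm]
  have hCRS : C = C * R * S := by
    rw [Matrix.mul_assoc, ← hSR, hC]
    calc R * (T * A) * R = R * (T * A) * (R * S * R) := by rw [hRSR]
      _ = _ := by rw [Matrix.mul_assoc R S R, hSR]; simp only [Matrix.mul_assoc]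
  have hH : (-C).IsHermitian := by
    rw [Matrix.IsHermitian, Matrix.conjTranspose_eq_transpose_of_trivial, Matrix.transpose_neg, hCt]
  have hneg : (-C).PosSemidef := by
    rw [hH.posSemidef_iff_eigenvalues_nonneg]
    intro i
    by_contra hi
    have hi : hH.eigenvalues i < 0 := not_le.mp hi
    have hw := hH.mulVec_eigenvectorBasis i
    have hw0 : (hH.eigenvectorBasis i).ofLp ≠ 0 := by
      intro h0
      exact hH.eigenvectorBasis.orthonormal.ne_zero i (by ext j; exact congrFun h0 j)
    generalize hH.eigenvalues i = l at *
    generalize (hH.eigenvectorBasis i).ofLp = w at *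
    have hCw : C *ᵥ w = (-l) • w := by
      rw [neg_smul, ← hw, Matrix.neg_mulVec, neg_neg]
    have hSw : S *ᵥ w ≠ 0 := by
      intro h0
      rw [hCRS, ← Matrix.mulVec_mulVec, h0, Matrix.mulVec_zero] at hCw
      rcases smul_eq_zero.mp hCw.symm with h | h
      · linarith
      · exact hw0 h
    have := hHurwitz _ (aux_left_eig A (-l) (S *ᵥ w) hSw (by
      rw [Matrix.mulVec_mulVec, ← hSC, ← Matrix.mulVec_mulVec, hCw, Matrix.mulVec_smul]))
    rw [Complex.ofReal_re] at this
    linarith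
  have h := hneg.mul_mul_conjTranspose_same S
  rwa [Matrix.conjTranspose_eq_transpose_of_trivial, hS, Matrix.mul_neg, Matrix.neg_mul, hSCS] at h
end

section
/- Let A, B, C, D be real matrices of sizes n×n, n×m, m×n, m×m respectively, with A Hurwitz (every complex eigenvalue of A has negative real part) and D + Dᵀ positive semidefinite. Suppose there exists a real symmetric positive semidefinite n×n matrix T with AᵀT = TA and TB = Cᵀ. Then T satisfies the passivity linear matrix inequality: the (n+m)×(n+m) block matrix with blocks [AᵀT + TA, TB − Cᵀ; BᵀT − C, −(D + Dᵀ)] is negative semidefinite; consequently the system ẋ = Ax + Bu, y = Cx + Du is passive. -/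
open Matrix MeasureTheory

/-- `(u, x, y)` is a trajectory of the LTI system `ẋ = Ax + Bu, y = Cx + Du`. -/
def IsTrajectory {n m : ℕ} (A : Matrix (Fin n) (Fin n) ℝ) (B : Matrix (Fin n) (Fin m) ℝ)
    (C : Matrix (Fin m) (Fin n) ℝ) (D : Matrix (Fin m) (Fin m) ℝ)
    (u : ℝ → Fin m → ℝ) (x : ℝ → Fin n → ℝ) (y : ℝ → Fin m → ℝ) : Prop :=
  Continuous u ∧ (∀ t : ℝ, HasDerivAt x (A *ᵥ x t + B *ᵥ u t) t) ∧
    ∀ t : ℝ, y t = C *ᵥ x t + D *ᵥ u t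


section Helpers

attribute [local instance] Matrix.linftyOpNormedRing Matrix.linftyOpNormedAlgebra

lemma aux_hasDerivAt_mulVec {a b : ℕ} (M : Matrix (Fin a) (Fin b) ℝ) {x : ℝ → Fin b → ℝ}
    {x' : Fin b → ℝ} {t : ℝ} (hx : HasDerivAt x x' t) :
    HasDerivAt (fun s => M *ᵥ x s) (M *ᵥ x') t :=
  (LinearMap.toContinuousLinearMap M.mulVecLin).hasFDerivAt.comp_hasDerivAt t hx

lemma aux_hasDerivAt_dot {a : ℕ} {x y : ℝ → Fin a → ℝ}
    {x' y' : Fin a → ℝ} {t : ℝ} (hx : HasDerivAt x x' t) (hy : HasDerivAt y y' t) :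
    HasDerivAt (fun s => x s ⬝ᵥ y s) (x' ⬝ᵥ y t + x t ⬝ᵥ y') t := by
  have h : HasDerivAt (fun s => ∑ i, x s i * y s i) (∑ i, (x' i * y t i + x t i * y' i)) t :=
    HasDerivAt.fun_sum fun i _ => (hasDerivAt_pi.1 hx i).mul (hasDerivAt_pi.1 hy i)
  rw [Finset.sum_add_distrib] at h
  exact h

/-- evaluation of a matrix at a fixed vector, as a linear map -/
def auxEval {a : ℕ} (v : Fin a → ℝ) : Matrix (Fin a) (Fin a) ℝ →ₗ[ℝ] (Fin a → ℝ) where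
  toFun M := M *ᵥ v
  map_add' M N := Matrix.add_mulVec M N v
  map_smul' c M := Matrix.smul_mulVec c M v

lemma aux_hasDerivAt_eval {a : ℕ} (v : Fin a → ℝ) {M : ℝ → Matrix (Fin a) (Fin a) ℝ}
    {M' : Matrix (Fin a) (Fin a) ℝ} {t : ℝ} (hM : HasDerivAt M M' t) :
    HasDerivAt (fun s => M s *ᵥ v) (M' *ᵥ v) t :=
  (LinearMap.toContinuousLinearMap (auxEval v)).hasFDerivAt.comp_hasDerivAt t hM

lemma aux_flow {n m : ℕ} (A : Matrix (Fin n) (Fin n) ℝ) (C : Matrix (Fin m) (Fin n) ℝ)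
    (v : Fin n → ℝ) (hv : ∀ k : ℕ, C *ᵥ ((A ^ k) *ᵥ v) = 0) (t₀ : ℝ) :
    ∃ w : ℝ → Fin n → ℝ, w t₀ = v ∧ (∀ t, HasDerivAt w (A *ᵥ w t) t) ∧
      ∀ t, C *ᵥ w t = 0 := by
  refine ⟨fun t => NormedSpace.exp ((t - t₀) • A) *ᵥ v, by simp, fun t => ?_, fun t => ?_⟩
  · have h := (hasDerivAt_exp_smul_const' (𝕂 := ℝ) A (t - t₀)).comp_sub_const t t₀
    have h2 := aux_hasDerivAt_eval v h
    rw [← Matrix.mulVec_mulVec] at h2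
    exact h2
  · have h := NormedSpace.exp_series_hasSum_exp' (𝕂 := ℝ) ((t - t₀) • A)
    have h2 := h.mapL (LinearMap.toContinuousLinearMap (C.mulVecLin ∘ₗ auxEval v))
    have h3 : ∀ k : ℕ, (LinearMap.toContinuousLinearMap (C.mulVecLin ∘ₗ auxEval v))
        ((k.factorial⁻¹ : ℝ) • ((t - t₀) • A) ^ k) = 0 := by
      intro k
      rw [map_smul, smul_pow, map_smul]
      have : (LinearMap.toContinuousLinearMap (C.mulVecLin ∘ₗ auxEval v)) (A ^ k) = 0 := hv k
      rw [this]; simp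
    simp only [h3] at h2
    exact h2.unique hasSum_zero

lemma aux_isUnit {n : ℕ} (A : Matrix (Fin n) (Fin n) ℝ)
    (hHurwitz : ∀ μ ∈ spectrum ℂ (A.map (fun x => (x : ℂ))), μ.re < 0) {s : ℝ} (hs : 0 ≤ s) :
    IsUnit (1 - s • A) := by
  rcases hs.eq_or_lt with rfl | hs
  · simp
  have h1 : ((s⁻¹ : ℝ) : ℂ) ∉ spectrum ℂ (A.map (fun x => (x : ℂ))) := by
    intro h
    have := hHurwitz _ h
    rw [Complex.ofReal_re] at this
    exact absurd this (not_lt.2 (by positivity))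
  rw [spectrum.notMem_iff, Matrix.isUnit_iff_isUnit_det] at h1
  have h2 : (algebraMap ℂ (Matrix (Fin n) (Fin n) ℂ) ((s⁻¹ : ℝ) : ℂ) - A.map (fun x => (x : ℂ)))
      = (Complex.ofRealHom).mapMatrix (algebraMap ℝ _ s⁻¹ - A) := by
    ext i j
    simp [Matrix.algebraMap_matrix_apply]
    split_ifs <;> simp
  rw [h2, ← RingHom.map_det, isUnit_iff_ne_zero, map_ne_zero, ← isUnit_iff_ne_zero,
    ← Matrix.isUnit_iff_isUnit_det] at h1
  have h3 : (1 - s • A) = (Units.mk0 s hs.ne') • (algebraMap ℝ (Matrix (Fin n) (Fin n) ℝ) s⁻¹ - A) := by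
    rw [Units.smul_mk0, smul_sub, Algebra.algebraMap_eq_smul_one, smul_smul, mul_inv_cancel₀ hs.ne',
      one_smul]
  rw [h3]
  exact h1.smul _

lemma aux_neg {n : ℕ} (A : Matrix (Fin n) (Fin n) ℝ)
    (hHurwitz : ∀ μ ∈ spectrum ℂ (A.map (fun x => (x : ℂ))), μ.re < 0)
    (T : Matrix (Fin n) (Fin n) ℝ) (hT : T.PosSemidef)
    (hTA : Aᵀ * T = T * A) (z : Fin n → ℝ) : z ⬝ᵥ ((T * A) *ᵥ z) ≤ 0 := by
  have hTT : Tᵀ = T := by simpa using hT.1.eq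
  have hpos : ∀ x : Fin n → ℝ, 0 ≤ x ⬝ᵥ (T *ᵥ x) := fun x => by
    simpa using hT.dotProduct_mulVec_nonneg x
  -- the key monotonicity
  have key : ∀ (x : Fin n → ℝ) (s : ℝ), 0 ≤ s →
      0 ≤ s * (x ⬝ᵥ (T *ᵥ (Ring.inverse (1 - s • A) *ᵥ x))) := by
    intro x
    set k : ℝ → ℝ := fun s => s * (x ⬝ᵥ (T *ᵥ (Ring.inverse (1 - s • A) *ᵥ x))) with hk
    have hder : ∀ s : ℝ, 0 ≤ s → ∃ k', 0 ≤ k' ∧ HasDerivAt k k' s := by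
      intro s hs
      obtain ⟨U, hU⟩ := aux_isUnit A hHurwitz hs
      set R : Matrix (Fin n) (Fin n) ℝ := Units.val (U⁻¹) with hR
      have hRi : Ring.inverse (1 - s • A) = R := by rw [← hU, Ring.inverse_unit]
      have hRU : R * (1 - s • A) = 1 := by rw [← hU, hR]; exact U.inv_mul
      have hUR : (1 - s • A) * R = 1 := by rw [← hU, hR]; exact U.mul_inv
      have d1 : HasDerivAt (fun s : ℝ => (1 : Matrix (Fin n) (Fin n) ℝ) - s • A) (-A) s := by
        have := ((hasDerivAt_id s).smul_const A).const_sub 1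
        rw [one_smul] at this
        exact this
      have d2 : HasDerivAt (fun s : ℝ => Ring.inverse (1 - s • A)) (R * A * R) s := by
        have h := hasFDerivAt_ringInverse (𝕜 := ℝ) U
        rw [hU] at h
        have h2 := h.comp_hasDerivAt s d1
        have e : R * A * R = -(R * (-A) * R) := by simp
        rw [e]
        exact h2
      have d3 := aux_hasDerivAt_mulVec T (aux_hasDerivAt_eval x d2)
      have d4 := (hasDerivAt_id s).mul (aux_hasDerivAt_dot (hasDerivAt_const s x) d3)
      refine ⟨_, ?_, d4⟩
      have e1 : R = 1 + s • (A * R) := by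
        have := hUR
        rw [sub_mul, one_mul, smul_mul_assoc, sub_eq_iff_eq_add] at this
        exact this
      have e2 : Rᵀ * T = T * R := by
        have a1 : (1 - s • A)ᵀ * T = T * (1 - s • A) := by
          simp [sub_mul, mul_sub, hTA]
        have a2 : Rᵀ * (1 - s • A)ᵀ = 1 := by rw [← Matrix.transpose_mul, hUR, Matrix.transpose_one]
        calc Rᵀ * T = Rᵀ * (T * (1 - s • A)) * R := by
              rw [mul_assoc, mul_assoc, hUR, mul_one]
          _ = T * R := by rw [← a1, ← mul_assoc, a2, one_mul]
      have e3 : T * R + s • (T * (R * A * R)) = Rᵀ * T * R := by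
        rw [e2]
        conv_rhs => rw [e1, mul_add, mul_one, ← e1]
        simp [mul_assoc]
      have e4 : 0 ≤ x ⬝ᵥ ((Rᵀ * T * R) *ᵥ x) := by
        have := hpos (R *ᵥ x)
        rw [← Matrix.mulVec_mulVec, ← Matrix.mulVec_mulVec, Matrix.dotProduct_mulVec x Rᵀ,
          Matrix.vecMul_transpose]
        exact this
      rw [← e3, Matrix.add_mulVec, dotProduct_add, Matrix.smul_mulVec, dotProduct_smul] at e4
      simpa [hRi] using e4
    have hmono : MonotoneOn k (Set.Ici 0) := by
      apply monotoneOn_of_deriv_nonneg (convex_Ici 0)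
      · intro s hs
        obtain ⟨k', -, h⟩ := hder s hs
        exact h.continuousAt.continuousWithinAt
      · intro s hs
        obtain ⟨k', -, h⟩ := hder s (interior_subset hs)
        exact h.differentiableAt.differentiableWithinAt
      · intro s hs
        obtain ⟨k', h0, h⟩ := hder s (interior_subset hs)
        rw [h.deriv]; exact h0
    intro s hs
    have := hmono (Set.mem_Ici.2 le_rfl) (Set.mem_Ici.2 hs) hs
    simpa [hk] using this
  have key2 : ∀ s : ℝ, 0 < s → s * (z ⬝ᵥ ((T * A) *ᵥ z)) ≤ z ⬝ᵥ (T *ᵥ z) := by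
    intro s hs
    have h := key ((1 - s • A) *ᵥ z) s hs.le
    have h' := nonneg_of_mul_nonneg_right h hs
    rw [Matrix.mulVec_mulVec z (Ring.inverse (1 - s • A)), Ring.inverse_mul_cancel _ (aux_isUnit A hHurwitz hs.le),
      Matrix.one_mulVec, Matrix.sub_mulVec, Matrix.one_mulVec, sub_dotProduct,
      Matrix.smul_mulVec, smul_dotProduct] at h'
    have e : (A *ᵥ z) ⬝ᵥ (T *ᵥ z) = z ⬝ᵥ ((T * A) *ᵥ z) := by
      rw [← hTA, ← Matrix.mulVec_mulVec, Matrix.dotProduct_mulVec z, Matrix.vecMul_transpose]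
    rw [e, smul_eq_mul] at h'
    linarith
  by_contra! hc
  have h := key2 ((z ⬝ᵥ (T *ᵥ z) + 1) / (z ⬝ᵥ ((T * A) *ᵥ z)))
    (div_pos (by linarith [hpos z]) hc)
  rw [div_mul_cancel₀ _ hc.ne'] at h
  linarith

/-- the storage inequality for one trajectory -/
lemma aux_storage {n m : ℕ} (A : Matrix (Fin n) (Fin n) ℝ) (B : Matrix (Fin n) (Fin m) ℝ)
    (C : Matrix (Fin m) (Fin n) ℝ) (D : Matrix (Fin m) (Fin m) ℝ)
    (hD : (D + Dᵀ).PosSemidef)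
    (T : Matrix (Fin n) (Fin n) ℝ) (hT : T.PosSemidef) (hTB : T * B = Cᵀ)
    (hneg : ∀ z, z ⬝ᵥ ((T * A) *ᵥ z) ≤ 0)
    (u : ℝ → Fin m → ℝ) (x : ℝ → Fin n → ℝ) (y : ℝ → Fin m → ℝ)
    (h : IsTrajectory A B C D u x y) (t₀ t₁ : ℝ) (ht : t₀ ≤ t₁) :
    -∫ t in t₀..t₁, u t ⬝ᵥ y t ≤ (1 / 2) * (x t₀ ⬝ᵥ (T *ᵥ x t₀)) := by
  obtain ⟨hu, hx, hy⟩ := h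
  have hTT : Tᵀ = T := by simpa using hT.1.eq
  have hpos : ∀ x : Fin n → ℝ, 0 ≤ x ⬝ᵥ (T *ᵥ x) := fun x => by
    simpa using hT.dotProduct_mulVec_nonneg x
  have hsymm : ∀ a b : Fin n → ℝ, a ⬝ᵥ (T *ᵥ b) = b ⬝ᵥ (T *ᵥ a) := fun a b => by
    rw [Matrix.dotProduct_mulVec, ← Matrix.mulVec_transpose, hTT, dotProduct_comm]
  have hDpos : ∀ v : Fin m → ℝ, 0 ≤ v ⬝ᵥ (D *ᵥ v) := fun v => by
    have h1 := hD.dotProduct_mulVec_nonneg v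
    have h2 : v ⬝ᵥ (Dᵀ *ᵥ v) = v ⬝ᵥ (D *ᵥ v) := by
      rw [Matrix.dotProduct_mulVec, Matrix.vecMul_transpose, dotProduct_comm]
    simp only [star_trivial, Matrix.add_mulVec, dotProduct_add, h2] at h1
    linarith
  have hxc : Continuous x := continuous_iff_continuousAt.2 fun t => (hx t).continuousAt
  have hyc : Continuous y := by
    have : y = fun t => C *ᵥ x t + D *ᵥ u t := funext hy
    rw [this]
    exact (continuous_const.matrix_mulVec hxc).add (continuous_const.matrix_mulVec hu)
  have hfc : Continuous fun t => u t ⬝ᵥ y t := hu.dotProduct hyc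
  set F : ℝ → ℝ := fun t => (∫ τ in t₀..t, u τ ⬝ᵥ y τ) - (1 / 2) * (x t ⬝ᵥ (T *ᵥ x t)) with hF
  have hder : ∀ t, HasDerivAt F (u t ⬝ᵥ y t - (1 / 2) *
      ((A *ᵥ x t + B *ᵥ u t) ⬝ᵥ (T *ᵥ x t) + x t ⬝ᵥ (T *ᵥ (A *ᵥ x t + B *ᵥ u t)))) t := by
    intro t
    exact (hfc.integral_hasStrictDerivAt t₀ t).hasDerivAt.sub
      ((aux_hasDerivAt_dot (hx t) (aux_hasDerivAt_mulVec T (hx t))).const_mul (1 / 2))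
  have hmono : Monotone F := by
    apply monotone_of_deriv_nonneg fun t => (hder t).differentiableAt
    intro t
    rw [(hder t).deriv, hsymm, hy t, Matrix.mulVec_add, Matrix.mulVec_mulVec, Matrix.mulVec_mulVec,
      hTB, dotProduct_add, dotProduct_add]
    have h3 : x t ⬝ᵥ (Cᵀ *ᵥ u t) = u t ⬝ᵥ (C *ᵥ x t) := by
      rw [Matrix.dotProduct_mulVec, Matrix.vecMul_transpose, dotProduct_comm]
    have := hneg (x t)
    have := hDpos (u t)
    rw [h3]
    linarith
  have h1 := hmono ht
  simp only [hF, intervalIntegral.integral_same] at h1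
  have := hpos (x t₁)
  linarith

/-- two trajectories with equal past inputs and outputs differ by an unobservable state -/
lemma aux_unobs {n m : ℕ} (A : Matrix (Fin n) (Fin n) ℝ) (C : Matrix (Fin m) (Fin n) ℝ)
    (z : ℝ → Fin n → ℝ) (t₀ : ℝ) (hz : ∀ t < t₀, HasDerivAt z (A *ᵥ z t) t)
    (hzc : ContinuousAt z t₀) (hC : ∀ t < t₀, C *ᵥ z t = 0) (k : ℕ) :
    C *ᵥ ((A ^ k) *ᵥ z t₀) = 0 := by
  have h : ∀ k : ℕ, ∀ t < t₀, (C * A ^ k) *ᵥ z t = 0 := by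
    intro k
    induction k with
    | zero => simpa using hC
    | succ k ih =>
      intro t ht
      have h1 := aux_hasDerivAt_mulVec (C * A ^ k) (hz t ht)
      have h2 : HasDerivAt (fun s => (C * A ^ k) *ᵥ z s) 0 t := by
        refine (hasDerivAt_const t (0 : Fin m → ℝ)).congr_of_eventuallyEq ?_
        filter_upwards [Iio_mem_nhds ht] with s hs using ih s hs
      rw [pow_succ, ← Matrix.mul_assoc, ← Matrix.mulVec_mulVec]
      exact h1.unique h2
  rw [Matrix.mulVec_mulVec]
  have hc : ContinuousAt (fun s => (C * A ^ k) *ᵥ z s) t₀ :=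
    (LinearMap.toContinuousLinearMap (C * A ^ k).mulVecLin).continuous.continuousAt.comp hzc
  have l1 : Filter.Tendsto (fun s => (C * A ^ k) *ᵥ z s) (nhdsWithin t₀ (Set.Iio t₀))
      (nhds ((C * A ^ k) *ᵥ z t₀)) := hc.tendsto.mono_left nhdsWithin_le_nhds
  have l2 : Filter.Tendsto (fun s => (C * A ^ k) *ᵥ z s) (nhdsWithin t₀ (Set.Iio t₀))
      (nhds 0) := by
    refine tendsto_const_nhds.congr' ?_
    filter_upwards [self_mem_nhdsWithin] with s hs using (h k s hs).symm
  exact tendsto_nhds_unique l1 l2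

end Helpers

/-- if A is Hurwitz, D + Dᵀ is positive semidefinite and there is a
symmetric positive semidefinite T with AᵀT = TA and TB = Cᵀ, then T satisfies the
passivity LMI (the block matrix is negative semidefinite) and the system is
passive. -/
theorem lemma_passivity_lmi_and_passive
    (n m : ℕ)
    (A : Matrix (Fin n) (Fin n) ℝ) (B : Matrix (Fin n) (Fin m) ℝ)
    (C : Matrix (Fin m) (Fin n) ℝ) (D : Matrix (Fin m) (Fin m) ℝ)
    (hHurwitz : ∀ μ ∈ spectrum ℂ (A.map (fun x => (x : ℂ))), μ.re < 0)
    (hD : (D + Dᵀ).PosSemidef)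
    (T : Matrix (Fin n) (Fin n) ℝ) (hT : T.PosSemidef)
    (hTA : Aᵀ * T = T * A) (hTB : T * B = Cᵀ) :
    (-(Matrix.fromBlocks (Aᵀ * T + T * A) (T * B - Cᵀ) (Bᵀ * T - C)
        (-(D + Dᵀ)))).PosSemidef ∧
    (∀ u x y, IsTrajectory A B C D u x y → ∀ t₀ : ℝ, ∃ K : ℝ,
      ∀ u₂ x₂ y₂, IsTrajectory A B C D u₂ x₂ y₂ →
        (∀ t < t₀, u₂ t = u t ∧ y₂ t = y t) →
        ∀ t₁ : ℝ, t₀ ≤ t₁ → -∫ t in t₀..t₁, u₂ t ⬝ᵥ y₂ t ≤ K) := by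
  have hTT : Tᵀ = T := by simpa using hT.1.eq
  have hneg := aux_neg A hHurwitz T hT hTA
  constructor
  · have hB : Bᵀ * T = C := by
      have := congrArg Matrix.transpose hTB
      rwa [Matrix.transpose_mul, hTT, Matrix.transpose_transpose] at this
    have hP : (-(T * A + T * A)).PosSemidef := by
      refine Matrix.PosSemidef.of_dotProduct_mulVec_nonneg ?_ fun z => ?_
      · have : (T * A)ᵀ = T * A := by rw [Matrix.transpose_mul, hTT, hTA]
        simp only [Matrix.IsHermitian, Matrix.conjTranspose_eq_transpose_of_trivial,
          Matrix.transpose_neg, Matrix.transpose_add, this]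
      · have := hneg z
        simp only [star_trivial, Matrix.neg_mulVec, Matrix.add_mulVec, dotProduct_neg,
          dotProduct_add]
        linarith
    rw [hTB, hB, hTA, sub_self, sub_self, Matrix.fromBlocks_neg, neg_zero, neg_zero, neg_neg]
    refine Matrix.PosSemidef.of_dotProduct_mulVec_nonneg ?_ fun z => ?_
    · exact Matrix.IsHermitian.fromBlocks hP.1 (by simp) hD.1
    · have h1 := hP.dotProduct_mulVec_nonneg (z ∘ Sum.inl)
      have h2 := hD.dotProduct_mulVec_nonneg (z ∘ Sum.inr)
      rw [Matrix.fromBlocks_mulVec]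
      simp only [star_trivial, Matrix.zero_mulVec, add_zero, zero_add] at h1 h2 ⊢
      have h3 := add_nonneg h1 h2
      simpa only [dotProduct, Fintype.sum_sum_type, Sum.elim_inl, Sum.elim_inr,
        Function.comp_apply] using h3
  · intro u x y h t₀
    refine ⟨(1 / 2) * (x t₀ ⬝ᵥ (T *ᵥ x t₀)), fun u₂ x₂ y₂ h₂ hpast t₁ ht => ?_⟩
    obtain ⟨hu, hx, hy⟩ := h
    obtain ⟨hu₂, hx₂, hy₂⟩ := h₂
    have hobs := aux_unobs A C (fun t => x₂ t - x t) t₀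
      (fun t ht => by
        have := (hx₂ t).sub (hx t)
        rw [(hpast t ht).1, add_sub_add_right_eq_sub, ← Matrix.mulVec_sub] at this
        exact this)
      ((hx₂ t₀).continuousAt.sub (hx t₀).continuousAt)
      (fun t ht => by
        have h1 := (hpast t ht).2
        rw [hy₂, hy, (hpast t ht).1] at h1
        rw [Matrix.mulVec_sub, add_right_cancel h1, sub_self])
    obtain ⟨w, hw0, hw, hwC⟩ := aux_flow A C _ hobs t₀
    have htr : IsTrajectory A B C D u₂ (fun t => x₂ t - w t) y₂ := by
      refine ⟨hu₂, fun t => ?_, fun t => ?_⟩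
      · have := (hx₂ t).sub (hw t)
        rw [add_sub_right_comm, ← Matrix.mulVec_sub] at this
        exact this
      · rw [hy₂, Matrix.mulVec_sub, hwC, sub_zero]
    have := aux_storage A B C D hD T hT hTB hneg u₂ _ y₂ htr t₀ t₁ ht
    simpa [hw0] using this
end
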